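/- Let Ω = {ℓ, h} be a binary state space with prior p = p(ℓ) ∈ (0,1) and n = 2 receivers, and let v^ℓ, v^h : [0,1]^2 → ℝ be continuous with v^ω(x_1,x_2) = v^ω(x_2,x_1) for all x_1, x_2 and both ω (beliefs identified with the probability of state ℓ). Define v̄ : [0,1] → ℝ by v̄(x) = x·v^ℓ(x,1) + (1−x)·v^h(x,0), and let cav[v̄](p) denote the supremum of ∫_{[0,1]} v̄ dλ over Borel probability measures λ on [0,1] with ∫ x dλ(x) = p. Suppose there exist real numbers V^ℓ, V^h and a continuous function α : [0,1] → ℝ such that p·V^ℓ + (1−p)·V^h = cav[v̄](p) and, for all x_1, x_2 ∈ [0,1], v^ℓ(x_1,x_2) ≤ V^ℓ + (1−x_1)·α(x_1) + (1−x_2)·α(x_2) and v^h(x_1,x_2) ≤ V^h − x_1·α(x_1) − x_2·α(x_2). Then the value of the persuasion problem equals cav[v̄](p), and it is attained by a full-information/partial-information policy that reveals the state to receiver 2. -/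

import Mathlib

open MeasureTheory

noncomputable section

/-- In the binary-state case a belief is identified with the probability of state `ℓ`,
a number in `[0,1]`. -/
abbrev BeliefI : Type := Set.Icc (0 : ℝ) 1

/-- States: `true` is the low state `ℓ`, `false` is the high state `h`. -/
abbrev StateL : Bool := true
abbrev StateH : Bool := false

/-- The joint distribution of the state and the two receivers' beliefs, for prior
`p = p(ℓ)` and conditional belief distributions `μl` (given `ℓ`) and `μh` (given `h`). -/
def jointPBin (p : ℝ) (μl μh : Measure (Fin 2 → BeliefI)) :
    Measure (Bool × (Fin 2 → BeliefI)) :=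
  ENNReal.ofReal p • ((Measure.dirac StateL).prod μl) +
    ENNReal.ofReal (1 - p) • ((Measure.dirac StateH).prod μh)

/-- Feasibility of a pair of conditional belief distributions in the two-receiver
binary-state problem: conditionally on the information `σ(x_i)` of each receiver `i`,
the conditional probability of the state `ℓ` is `x_i` and of the state `h` is `1 - x_i`. -/
def FeasibleBin (p : ℝ) (μl μh : Measure (Fin 2 → BeliefI)) : Prop :=
  IsProbabilityMeasure μl ∧ IsProbabilityMeasure μh ∧
  ∀ i : Fin 2,
    ((fun z : Bool × (Fin 2 → BeliefI) => (z.2 i).1)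
      =ᵐ[jointPBin p μl μh]
      (jointPBin p μl μh)[Set.indicator {z : Bool × (Fin 2 → BeliefI) | z.1 = StateL}
          (fun _ => (1 : ℝ)) |
        MeasurableSpace.comap (fun z : Bool × (Fin 2 → BeliefI) => z.2 i) inferInstance]) ∧
    ((fun z : Bool × (Fin 2 → BeliefI) => 1 - (z.2 i).1)
      =ᵐ[jointPBin p μl μh]
      (jointPBin p μl μh)[Set.indicator {z : Bool × (Fin 2 → BeliefI) | z.1 = StateH}
          (fun _ => (1 : ℝ)) |
        MeasurableSpace.comap (fun z : Bool × (Fin 2 → BeliefI) => z.2 i) inferInstance])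

/-- the value of the binary-state two-receiver persuasion problem -/
def ValBin (p : ℝ) (vl vh : (Fin 2 → BeliefI) → ℝ) : ℝ :=
  sSup { r : ℝ | ∃ μl μh : Measure (Fin 2 → BeliefI), FeasibleBin p μl μh ∧
    r = p * ∫ x, vl x ∂μl + (1 - p) * ∫ x, vh x ∂μh }

end

/-- The indirect utility `v̄(x) = x·v^ℓ(x,1) + (1−x)·v^h(x,0)` of a sender who reveals the
state to receiver 2 and induces belief `x` of receiver 1. -/
noncomputable def vbar (vl vh : (Fin 2 → BeliefI) → ℝ) (x : BeliefI) : ℝ :=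
  x.1 * vl ![x, ⟨1, by norm_num⟩] + (1 - x.1) * vh ![x, ⟨0, by norm_num⟩]

/-- `cav[v̄](p)`: the supremum of `∫ v̄ dλ` over distributions `λ` on `[0,1]` with mean `p`. -/
noncomputable def cavVbar (p : ℝ) (vl vh : (Fin 2 → BeliefI) → ℝ) : ℝ :=
  sSup { r : ℝ | ∃ lam : Measure BeliefI, IsProbabilityMeasure lam ∧
    (∫ x : BeliefI, x.1 ∂lam) = p ∧ r = ∫ x, vbar vl vh x ∂lam }


theorem jointPBin_prob (p : ℝ) (_hp0 : 0 < p) (_hp1 : p < 1) (μl μh : Measure (Fin 2 → BeliefI))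
    [IsProbabilityMeasure μl] [IsProbabilityMeasure μh] :
    IsFiniteMeasure (jointPBin p μl μh) := by
  unfold jointPBin
  have h1 : IsFiniteMeasure (ENNReal.ofReal p • ((Measure.dirac StateL).prod μl)) :=
    Measure.smul_finite _ ENNReal.ofReal_ne_top
  have h2 : IsFiniteMeasure (ENNReal.ofReal (1 - p) • ((Measure.dirac StateH).prod μh)) :=
    Measure.smul_finite _ ENNReal.ofReal_ne_top
  infer_instance

theorem int_bdd {X : Type*} [MeasurableSpace X] (μ : Measure X) [IsFiniteMeasure μ]
    (f : X → ℝ) (hf : Measurable f) (C : ℝ) (hC : ∀ x, |f x| ≤ C) : Integrable f μ :=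
  Integrable.of_bound hf.aestronglyMeasurable C (Filter.Eventually.of_forall hC)

theorem integral_jointPBin (p : ℝ) (hp0 : 0 < p) (hp1 : p < 1)
    (μl μh : Measure (Fin 2 → BeliefI))
    [IsProbabilityMeasure μl] [IsProbabilityMeasure μh]
    (f : Bool × (Fin 2 → BeliefI) → ℝ) (hf : Measurable f) (C : ℝ) (hC : ∀ x, |f x| ≤ C) :
    ∫ z, f z ∂(jointPBin p μl μh) =
      p * ∫ x, f (true, x) ∂μl + (1 - p) * ∫ x, f (false, x) ∂μh := by
  unfold jointPBin
  have h1 : IsFiniteMeasure (ENNReal.ofReal p • ((Measure.dirac StateL).prod μl)) :=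
    Measure.smul_finite _ ENNReal.ofReal_ne_top
  have h2 : IsFiniteMeasure (ENNReal.ofReal (1 - p) • ((Measure.dirac StateH).prod μh)) :=
    Measure.smul_finite _ ENNReal.ofReal_ne_top
  rw [integral_add_measure (int_bdd _ f hf C hC) (int_bdd _ f hf C hC),
    integral_smul_measure, integral_smul_measure, Measure.dirac_prod, Measure.dirac_prod,
    integral_map measurable_prodMk_left.aemeasurable hf.aestronglyMeasurable,
    integral_map measurable_prodMk_left.aemeasurable hf.aestronglyMeasurable,
    ENNReal.toReal_ofReal hp0.le, ENNReal.toReal_ofReal (by linarith)]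
  rfl

theorem exists_bound (α : BeliefI → ℝ) (hα : Continuous α) : ∃ C, ∀ x, |α x| ≤ C := by
  obtain ⟨C, hC⟩ := isCompact_univ.exists_bound_of_continuousOn hα.continuousOn
  exact ⟨C, fun x => hC x trivial⟩

theorem meas_indL : Measurable (Set.indicator {z : Bool × (Fin 2 → BeliefI) | z.1 = StateL}
    (fun _ => (1 : ℝ))) :=
  measurable_const.indicator (measurable_fst (measurableSet_singleton true))

theorem meas_indH : Measurable (Set.indicator {z : Bool × (Fin 2 → BeliefI) | z.1 = StateH}
    (fun _ => (1 : ℝ))) :=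
  measurable_const.indicator (measurable_fst (measurableSet_singleton false))

theorem feas_orth (p : ℝ) (hp0 : 0 < p) (hp1 : p < 1)
    (μl μh : Measure (Fin 2 → BeliefI)) (hF : FeasibleBin p μl μh)
    (α : BeliefI → ℝ) (hαc : Continuous α) (i : Fin 2) :
    p * ∫ x, (1 - (x i).1) * α (x i) ∂μl = (1 - p) * ∫ x, (x i).1 * α (x i) ∂μh := by
  obtain ⟨h1, h2, hF⟩ := hF
  obtain ⟨C, hC⟩ := exists_bound α hαc
  have hfin := jointPBin_prob p hp0 hp1 μl μh
  have hxm : Measurable (fun z : Bool × (Fin 2 → BeliefI) => z.2 i) := by fun_prop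
  have hCx : ∀ x : BeliefI, |x.1 * α x| ≤ C := fun x => by
    rw [abs_mul, abs_of_nonneg x.2.1]
    nlinarith [hC x, x.2.1, x.2.2, abs_nonneg (α x)]
  have hpo := condExp_stronglyMeasurable_mul_of_bound (μ := jointPBin p μl μh) hxm.comap_le
    (f := fun z => α (z.2 i))
    (g := Set.indicator {z : Bool × (Fin 2 → BeliefI) | z.1 = StateL} (fun _ => (1 : ℝ)))
    ((hαc.measurable.comp (comap_measurable _)).stronglyMeasurable)
    (int_bdd _ _ meas_indL 1 (fun z => by by_cases h : z.1 = StateL <;> simp [Set.indicator, h]))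
    C (Filter.Eventually.of_forall fun z => hC _)
  have hE := integral_condExp (μ := jointPBin p μl μh)
    (f := (fun z : Bool × (Fin 2 → BeliefI) => α (z.2 i)) *
      Set.indicator {z : Bool × (Fin 2 → BeliefI) | z.1 = StateL} (fun _ => (1 : ℝ)))
    hxm.comap_le
  rw [integral_congr_ae hpo] at hE
  have hE2 : ∫ z, (z.2 i).1 * α (z.2 i) ∂(jointPBin p μl μh) =
      ∫ z, α (z.2 i) * Set.indicator {z : Bool × (Fin 2 → BeliefI) | z.1 = StateL}
        (fun _ => (1 : ℝ)) z ∂(jointPBin p μl μh) := by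
    refine Eq.trans (integral_congr_ae ?_) hE
    filter_upwards [(hF i).1] with z hz
    simp only [Pi.mul_apply]
    rw [← hz, mul_comm]
  have hαm := hαc.measurable
  rw [integral_jointPBin p hp0 hp1 μl μh _ (by fun_prop) C (fun z => hCx _),
    integral_jointPBin p hp0 hp1 μl μh (fun z => α (z.2 i) *
      Set.indicator {z : Bool × (Fin 2 → BeliefI) | z.1 = StateL} (fun _ => (1 : ℝ)) z)
      ((by fun_prop : Measurable
        (fun z : Bool × (Fin 2 → BeliefI) => α (z.2 i))).mul meas_indL) C
      (fun z => by
        by_cases h : z.1 = StateL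
        · simpa [Set.indicator, h] using hC _
        · simpa [Set.indicator, h] using (abs_nonneg _).trans (hC (z.2 i)))] at hE2
  simp only [Set.indicator, Set.mem_ofPred_eq, if_true, mul_one, Bool.false_eq_true, if_false,
    mul_zero, integral_zero, add_zero] at hE2
  have : ∫ x, (1 - (x i).1) * α (x i) ∂μl =
      ∫ x, α (x i) ∂μl - ∫ x, (x i).1 * α (x i) ∂μl := by
    rw [← integral_sub (int_bdd _ _ (by fun_prop) C fun _ => hC _)
      (int_bdd _ _ (by fun_prop) C fun _ => hCx _)]
    congr 1; ext x; ring
  rw [this]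
  linarith

theorem feas_of (p : ℝ) (hp0 : 0 < p) (hp1 : p < 1)
    (μl μh : Measure (Fin 2 → BeliefI)) [IsProbabilityMeasure μl] [IsProbabilityMeasure μh]
    (h : ∀ i : Fin 2, ∀ A : Set BeliefI, MeasurableSet A →
      p * ∫ x, A.indicator (fun y => 1 - y.1) (x i) ∂μl =
      (1 - p) * ∫ x, A.indicator (fun y => y.1) (x i) ∂μh) : FeasibleBin p μl μh := by
  refine ⟨inferInstance, inferInstance, fun i => ?_⟩
  have hfin := jointPBin_prob p hp0 hp1 μl μh
  have hxm : Measurable (fun z : Bool × (Fin 2 → BeliefI) => z.2 i) := by fun_prop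
  have hbL : ∀ z : Bool × (Fin 2 → BeliefI),
      |Set.indicator {z : Bool × (Fin 2 → BeliefI) | z.1 = StateL} (fun _ => (1 : ℝ)) z| ≤ 1 :=
    fun z => by by_cases h : z.1 = StateL <;> simp [Set.indicator, h]
  have hb : ∀ z : Bool × (Fin 2 → BeliefI), |(z.2 i).1| ≤ 1 := fun z => by
    rw [abs_of_nonneg (z.2 i).2.1]; exact (z.2 i).2.2
  have hL : ((fun z : Bool × (Fin 2 → BeliefI) => (z.2 i).1)
      =ᵐ[jointPBin p μl μh]
      (jointPBin p μl μh)[Set.indicator {z : Bool × (Fin 2 → BeliefI) | z.1 = StateL}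
          (fun _ => (1 : ℝ)) |
        MeasurableSpace.comap (fun z : Bool × (Fin 2 → BeliefI) => z.2 i) inferInstance]) := by
    refine ae_eq_condExp_of_forall_setIntegral_eq hxm.comap_le (int_bdd _ _ meas_indL 1 hbL)
      (fun s _ _ => (int_bdd _ _ (by fun_prop) 1 hb).integrableOn) ?_ ?_
    · rintro s ⟨A, hA, rfl⟩ -
      have hs := hxm hA
      have hid : Measurable (fun y : BeliefI => y.1) := measurable_subtype_coe
      rw [← integral_indicator hs, ← integral_indicator hs,
        integral_jointPBin p hp0 hp1 μl μh _ ((by fun_prop : Measurable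
          (fun z : Bool × (Fin 2 → BeliefI) => (z.2 i).1)).indicator hs) 1 ?_,
        integral_jointPBin p hp0 hp1 μl μh _ (meas_indL.indicator hs) 1 ?_]
      · have h' := h i A hA
        have e1 : ∀ x : Fin 2 → BeliefI, A.indicator (fun y : BeliefI => 1 - y.1) (x i) =
          A.indicator (fun _ => (1:ℝ)) (x i) - A.indicator (fun y : BeliefI => y.1) (x i) := by
          intro x; by_cases hx : x i ∈ A <;> simp [hx]
        simp only [e1] at h'
        rw [integral_sub] at h'
        · have e2 : ∀ (b : Bool) (x : Fin 2 → BeliefI),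
            ((fun z : Bool × (Fin 2 → BeliefI) => z.2 i) ⁻¹' A).indicator
              (fun z : Bool × (Fin 2 → BeliefI) => (z.2 i).1) (b, x) =
              A.indicator (fun y : BeliefI => y.1) (x i) := by
            intro b x; by_cases hx : x i ∈ A <;> simp [hx]
          have e3 : ∀ (x : Fin 2 → BeliefI),
            ((fun z : Bool × (Fin 2 → BeliefI) => z.2 i) ⁻¹' A).indicator
              (Set.indicator {z : Bool × (Fin 2 → BeliefI) | z.1 = StateL} (fun _ => (1 : ℝ)))
                (true, x) = A.indicator (fun _ => (1:ℝ)) (x i) := by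
            intro x; by_cases hx : x i ∈ A <;> simp [hx]
          have e4 : ∀ (x : Fin 2 → BeliefI),
            ((fun z : Bool × (Fin 2 → BeliefI) => z.2 i) ⁻¹' A).indicator
              (Set.indicator {z : Bool × (Fin 2 → BeliefI) | z.1 = StateL} (fun _ => (1 : ℝ)))
                (false, x) = 0 := by
            intro x; by_cases hx : x i ∈ A <;> simp [hx]
          simp only [e2, e3, e4, integral_zero]
          linarith
        · exact int_bdd _ _ ((measurable_const.indicator hA).comp (measurable_pi_apply i)) 1
            fun x => by by_cases hx : x i ∈ A <;> simp [hx]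
        · refine int_bdd _ _ ((hid.indicator hA).comp (measurable_pi_apply i)) 1
            fun x => ?_
          by_cases hx : x i ∈ A
          · simpa [hx] using hb (true, x)
          · simp [hx]
      · intro z
        by_cases hz : z.2 i ∈ A
        · simpa [Set.indicator, hz] using hbL z
        · simp [Set.indicator, hz]
      · intro z
        by_cases hz : z.2 i ∈ A
        · simpa [Set.indicator, hz] using hb z
        · simp [Set.indicator, hz]
    · exact (measurable_subtype_coe.comp (comap_measurable _)).stronglyMeasurable.aestronglyMeasurable
  refine ⟨hL, ?_⟩
  have e : Set.indicator {z : Bool × (Fin 2 → BeliefI) | z.1 = StateH} (fun _ => (1 : ℝ)) =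
      (fun _ => (1:ℝ)) - Set.indicator {z : Bool × (Fin 2 → BeliefI) | z.1 = StateL}
        (fun _ => (1 : ℝ)) := by
    ext ⟨b, x⟩; cases b <;> simp [Set.indicator]
  rw [e]
  have hs := condExp_sub (μ := jointPBin p μl μh) (integrable_const (1:ℝ))
    (int_bdd (jointPBin p μl μh) _ meas_indL 1 hbL)
    (MeasurableSpace.comap (fun z : Bool × (Fin 2 → BeliefI) => z.2 i) inferInstance)
  filter_upwards [hs, hL] with z h1 h2
  rw [h1, Pi.sub_apply, ← h2, condExp_const hxm.comap_le]

theorem feas_upper (p : ℝ) (hp0 : 0 < p) (hp1 : p < 1)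
    (vl vh : (Fin 2 → BeliefI) → ℝ)
    (hvlc : Continuous vl) (hvhc : Continuous vh)
    (Vl Vh : ℝ) (α : BeliefI → ℝ) (hαc : Continuous α)
    (hdl : ∀ x : Fin 2 → BeliefI,
      vl x ≤ Vl + (1 - (x 0).1) * α (x 0) + (1 - (x 1).1) * α (x 1))
    (hdh : ∀ x : Fin 2 → BeliefI,
      vh x ≤ Vh - (x 0).1 * α (x 0) - (x 1).1 * α (x 1))
    (μl μh : Measure (Fin 2 → BeliefI)) (hF : FeasibleBin p μl μh) :
    p * ∫ x, vl x ∂μl + (1 - p) * ∫ x, vh x ∂μh ≤ p * Vl + (1 - p) * Vh := by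
  have h0 := feas_orth p hp0 hp1 μl μh hF α hαc 0
  have h1 := feas_orth p hp0 hp1 μl μh hF α hαc 1
  obtain ⟨_, _, -⟩ := hF
  have ci : ∀ (μ : Measure (Fin 2 → BeliefI)) [IsProbabilityMeasure μ]
      (f : (Fin 2 → BeliefI) → ℝ), Continuous f → Integrable f μ := fun μ _ f hf =>
    hf.integrable_of_hasCompactSupport (HasCompactSupport.of_compactSpace f)
  have hl : ∫ x, vl x ∂μl ≤ Vl + ∫ x, (1 - (x 0).1) * α (x 0) ∂μl
      + ∫ x, (1 - (x 1).1) * α (x 1) ∂μl := by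
    calc _ ≤ ∫ x, (Vl + (1 - (x 0).1) * α (x 0) + (1 - (x 1).1) * α (x 1)) ∂μl :=
          integral_mono (ci _ _ hvlc) (ci _ _ (by fun_prop)) hdl
      _ = _ := by
        rw [integral_add (ci _ _ (by fun_prop)) (ci _ _ (by fun_prop)),
          integral_add (ci _ _ (by fun_prop)) (ci _ _ (by fun_prop))]
        simp
  have hh : ∫ x, vh x ∂μh ≤ Vh - ∫ x, (x 0).1 * α (x 0) ∂μh
      - ∫ x, (x 1).1 * α (x 1) ∂μh := by
    calc _ ≤ ∫ x, (Vh - (x 0).1 * α (x 0) - (x 1).1 * α (x 1)) ∂μh :=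
          integral_mono (ci _ _ hvhc) (ci _ _ (by fun_prop)) hdh
      _ = _ := by
        rw [integral_sub (ci _ _ (by fun_prop)) (ci _ _ (by fun_prop)),
          integral_sub (ci _ _ (by fun_prop)) (ci _ _ (by fun_prop))]
        simp
  have a := mul_le_mul_of_nonneg_left hl hp0.le
  have b := mul_le_mul_of_nonneg_left hh (by linarith : 0 ≤ 1 - p)
  linarith

theorem vbar_cont (vl vh : (Fin 2 → BeliefI) → ℝ)
    (hvlc : Continuous vl) (hvhc : Continuous vh) : Continuous (vbar vl vh) := by
  have hm : ∀ c : BeliefI, Continuous (fun x : BeliefI => (![x, c] : Fin 2 → BeliefI)) :=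
    fun c => continuous_pi fun i => by fin_cases i <;> simp <;> fun_prop
  unfold vbar
  exact (continuous_subtype_val.mul (hvlc.comp (hm _))).add
    ((continuous_const.sub continuous_subtype_val).mul (hvhc.comp (hm _)))

theorem cav_attained (p : ℝ) (hp0 : 0 < p) (hp1 : p < 1) (f : BeliefI → ℝ) (hf : Continuous f) :
    ∃ lam : Measure BeliefI, IsProbabilityMeasure lam ∧ (∫ x : BeliefI, x.1 ∂lam) = p ∧
      ∫ x, f x ∂lam = sSup { r : ℝ | ∃ lam : Measure BeliefI, IsProbabilityMeasure lam ∧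
        (∫ x : BeliefI, x.1 ∂lam) = p ∧ r = ∫ x, f x ∂lam } := by
  have hc : ∀ g : BeliefI → ℝ, Continuous g →
      Continuous (fun μ : ProbabilityMeasure BeliefI => ∫ x, g x ∂(μ : Measure BeliefI)) := by
    intro g hg
    rw [continuous_iff_continuousAt]
    intro μ
    exact (ProbabilityMeasure.tendsto_iff_forall_integral_tendsto.1 Filter.tendsto_id)
      (BoundedContinuousFunction.mkOfCompact ⟨g, hg⟩)
  have hcl : IsClosed {μ : ProbabilityMeasure BeliefI | ∫ x, x.1 ∂(μ : Measure BeliefI) = p} :=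
    isClosed_eq (hc _ continuous_subtype_val) continuous_const
  let P : BeliefI := ⟨p, hp0.le, hp1.le⟩
  obtain ⟨μ, hμ, hmax⟩ := hcl.isCompact.exists_isMaxOn
    ⟨⟨Measure.dirac P, inferInstance⟩, integral_dirac (fun x : BeliefI => x.1) P⟩ (hc f hf).continuousOn
  refine ⟨μ, inferInstance, hμ, ?_⟩
  symm
  apply IsGreatest.csSup_eq
  refine ⟨⟨μ, inferInstance, hμ, rfl⟩, ?_⟩
  rintro r ⟨lam, hl, hm, rfl⟩
  exact hmax (show (⟨lam, hl⟩ : ProbabilityMeasure BeliefI) ∈ _ from hm)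

theorem density_push (lam : Measure BeliefI) [IsProbabilityMeasure lam]
    (d : BeliefI → ℝ) (hd : Continuous d) (hd0 : ∀ x, 0 ≤ d x) (hd1 : ∫ x, d x ∂lam = 1)
    (c : BeliefI) : ∃ μ : Measure (Fin 2 → BeliefI), IsProbabilityMeasure μ ∧
      (∀ f : (Fin 2 → BeliefI) → ℝ, Measurable f → ∫ x, f x ∂μ = ∫ x, d x * f ![x, c] ∂lam) ∧
      μ {x | x 1 ≠ c} = 0 := by
  have hm : Measurable (fun x : BeliefI => (![x, c] : Fin 2 → BeliefI)) :=
    measurable_pi_lambda _ fun i => by fin_cases i <;> simp <;> fun_prop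
  have hdm : Measurable fun x => ENNReal.ofReal (d x) := hd.measurable.ennreal_ofReal
  have hdi : Integrable d lam :=
    hd.integrable_of_hasCompactSupport (HasCompactSupport.of_compactSpace d)
  have hP : IsProbabilityMeasure (lam.withDensity fun x => ENNReal.ofReal (d x)) := by
    constructor
    rw [withDensity_apply _ MeasurableSet.univ, Measure.restrict_univ,
      ← ofReal_integral_eq_lintegral_ofReal hdi (Filter.Eventually.of_forall hd0), hd1]
    simp
  refine ⟨(lam.withDensity fun x => ENNReal.ofReal (d x)).map (fun x => ![x, c]),
    Measure.isProbabilityMeasure_map hm.aemeasurable, fun f hf => ?_, ?_⟩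
  · rw [integral_map hm.aemeasurable hf.aestronglyMeasurable,
      integral_withDensity_eq_integral_toReal_smul hdm
        (Filter.Eventually.of_forall fun _ => ENNReal.ofReal_lt_top)]
    simp [ENNReal.toReal_ofReal (hd0 _)]
  · have hms : MeasurableSet {x : Fin 2 → BeliefI | x 1 ≠ c} :=
      (measurableSet_eq_fun (measurable_pi_apply 1) measurable_const).compl
    rw [Measure.map_apply hm hms]
    simp

/-- a sufficient condition for the optimality of a
full-information/partial-information policy
(Proposition `prop_sufficient_full_info_partial_info_optimality`). -/
theorem full_info_partial_info_optimal
    (p : ℝ) (hp0 : 0 < p) (hp1 : p < 1)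
    (vl vh : (Fin 2 → BeliefI) → ℝ)
    (hvlc : Continuous vl) (hvhc : Continuous vh)
    (hvlsym : ∀ x : Fin 2 → BeliefI, vl (x ∘ (Equiv.swap 0 1)) = vl x)
    (hvhsym : ∀ x : Fin 2 → BeliefI, vh (x ∘ (Equiv.swap 0 1)) = vh x)
    (Vl Vh : ℝ) (α : BeliefI → ℝ) (hαc : Continuous α)
    (hV : p * Vl + (1 - p) * Vh = cavVbar p vl vh)
    (hdl : ∀ x : Fin 2 → BeliefI,
      vl x ≤ Vl + (1 - (x 0).1) * α (x 0) + (1 - (x 1).1) * α (x 1))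
    (hdh : ∀ x : Fin 2 → BeliefI,
      vh x ≤ Vh - (x 0).1 * α (x 0) - (x 1).1 * α (x 1)) :
    ValBin p vl vh = cavVbar p vl vh ∧
    ∃ μl μh : Measure (Fin 2 → BeliefI), FeasibleBin p μl μh ∧
      p * (∫ x, vl x ∂μl) + (1 - p) * (∫ x, vh x ∂μh) = cavVbar p vl vh ∧
      -- the optimal policy reveals the state to receiver 2 (index 1):
      μl {x : Fin 2 → BeliefI | (x 1).1 ≠ 1} = 0 ∧
      μh {x : Fin 2 → BeliefI | (x 1).1 ≠ 0} = 0 := by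
  have hq : 0 < 1 - p := by linarith
  obtain ⟨lam, hlam, hmean, hopt⟩ := cav_attained p hp0 hp1 _ (vbar_cont vl vh hvlc hvhc)
  have hxi : Integrable (fun x : BeliefI => x.1) lam :=
    continuous_subtype_val.integrable_of_hasCompactSupport (HasCompactSupport.of_compactSpace _)
  obtain ⟨μl, hPl, hIl, hSl⟩ := density_push lam (fun x => p⁻¹ * x.1) (by fun_prop)
    (fun x => mul_nonneg (inv_pos.2 hp0).le x.2.1)
    (by rw [integral_const_mul, hmean, inv_mul_cancel₀ hp0.ne']) ⟨1, by norm_num⟩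
  obtain ⟨μh, hPh, hIh, hSh⟩ := density_push lam (fun x => (1 - p)⁻¹ * (1 - x.1)) (by fun_prop)
    (fun x => mul_nonneg (inv_pos.2 hq).le (by linarith [x.2.2]))
    (by rw [integral_const_mul, integral_sub (integrable_const _) hxi, hmean]
        simp [inv_mul_cancel₀ hq.ne']) ⟨0, by norm_num⟩
  have hIl' : ∀ f : (Fin 2 → BeliefI) → ℝ, Measurable f →
      p * ∫ x, f x ∂μl = ∫ x, x.1 * f ![x, ⟨1, by norm_num⟩] ∂lam := fun f hf => by
    rw [hIl f hf]
    simp only [mul_assoc]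
    rw [integral_const_mul, mul_inv_cancel_left₀ hp0.ne']
  have hIh' : ∀ f : (Fin 2 → BeliefI) → ℝ, Measurable f →
      (1 - p) * ∫ x, f x ∂μh = ∫ x, (1 - x.1) * f ![x, ⟨0, by norm_num⟩] ∂lam := fun f hf => by
    rw [hIh f hf]
    simp only [mul_assoc]
    rw [integral_const_mul, mul_inv_cancel_left₀ hq.ne']
  have hfeas : FeasibleBin p μl μh := by
    refine feas_of p hp0 hp1 μl μh fun i A hA => ?_
    have hid : Measurable (fun y : BeliefI => y.1) := measurable_subtype_coe
    rw [hIl' (fun x => A.indicator (fun y : BeliefI => 1 - y.1) (x i))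
        (((measurable_const.sub hid).indicator hA).comp (measurable_pi_apply i)),
      hIh' (fun x => A.indicator (fun y : BeliefI => y.1) (x i))
        ((hid.indicator hA).comp (measurable_pi_apply i))]
    congr 1
    ext x
    fin_cases i
    · by_cases hx : x ∈ A <;> simp [hx]
      ring
    · by_cases a : (1 : BeliefI) ∈ A <;> by_cases b : (0 : BeliefI) ∈ A <;> simp [Set.indicator, a, b]
  have hm : ∀ c : BeliefI, Continuous (fun x : BeliefI => (![x, c] : Fin 2 → BeliefI)) :=
    fun c => continuous_pi fun i => by fin_cases i <;> simp <;> fun_prop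
  have hval : p * (∫ x, vl x ∂μl) + (1 - p) * (∫ x, vh x ∂μh) = cavVbar p vl vh := by
    rw [hIl' vl hvlc.measurable, hIh' vh hvhc.measurable, ← integral_add]
    · exact hopt
    · exact (continuous_subtype_val.mul (hvlc.comp (hm _))).integrable_of_hasCompactSupport
        (HasCompactSupport.of_compactSpace _)
    · exact ((continuous_const.sub continuous_subtype_val).mul
        (hvhc.comp (hm _))).integrable_of_hasCompactSupport (HasCompactSupport.of_compactSpace _)
  refine ⟨?_, μl, μh, hfeas, hval, ?_, ?_⟩
  · refine IsGreatest.csSup_eq ⟨⟨μl, μh, hfeas, hval.symm⟩, ?_⟩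
    rintro r ⟨ml, mh, hF, rfl⟩
    rw [← hV]
    exact feas_upper p hp0 hp1 vl vh hvlc hvhc Vl Vh α hαc hdl hdh ml mh hF
  · refine measure_mono_null (fun x hx => ?_) hSl
    rw [Set.mem_ofPred_eq] at hx ⊢
    exact fun hc => hx (congrArg Subtype.val hc)
  · refine measure_mono_null (fun x hx => ?_) hSh
    rw [Set.mem_ofPred_eq] at hx ⊢
    exact fun hc => hx (congrArg Subtype.val hc)
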